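/- Let f' = ax⁴+bx³z+cx²z²+dxz³+ez⁴ be a binary quartic and let f = (f₁,f₂) with f₁ = x₁²−x₃x₄ and f₂ = x₂² − (ax₃² + bx₁x₃ + cx₃x₄ + dx₁x₄ + ex₄²). Then there is a K-algebra isomorphism θ : A_f → Mat₂(A_{f'}) given by p ↦ E₁₂, q ↦ r'I₂ + s'E₁₂, r ↦ E₂₁, s ↦ t'I₂ + s'E₂₁, where r',s',t' are the generators of A_{f'}. -/

import Mathlib

/-- The relations defining the algebra `A_f` associated to the binary quartic
`f = a x⁴ + b x³ z + c x² z² + d x z³ + e z⁴`: the quotient of the free algebra on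
generators `r = ι 0`, `s = ι 1`, `t = ι 2` by the two-sided ideal generated by
`r²−a`, `rs+sr−b`, `rt+tr+s²−c`, `st+ts−d`, `t²−e`. -/
def bqRel (K : Type*) [Field K] (a b c d e : K) :
    FreeAlgebra K (Fin 3) → FreeAlgebra K (Fin 3) → Prop := fun x y =>
  y = 0 ∧ (
    x = FreeAlgebra.ι K 0 * FreeAlgebra.ι K 0 - algebraMap K _ a ∨
    x = FreeAlgebra.ι K 0 * FreeAlgebra.ι K 1 + FreeAlgebra.ι K 1 * FreeAlgebra.ι K 0
        - algebraMap K _ b ∨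
    x = FreeAlgebra.ι K 0 * FreeAlgebra.ι K 2 + FreeAlgebra.ι K 2 * FreeAlgebra.ι K 0
        + FreeAlgebra.ι K 1 * FreeAlgebra.ι K 1 - algebraMap K _ c ∨
    x = FreeAlgebra.ι K 1 * FreeAlgebra.ι K 2 + FreeAlgebra.ι K 2 * FreeAlgebra.ι K 1
        - algebraMap K _ d ∨
    x = FreeAlgebra.ι K 2 * FreeAlgebra.ι K 2 - algebraMap K _ e)

/-- The algebra `A_f` associated to a binary quartic. -/
def BQAlg (K : Type*) [Field K] (a b c d e : K) := RingQuot (bqRel K a b c d e)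

noncomputable instance (K : Type*) [Field K] (a b c d e : K) : Ring (BQAlg K a b c d e) :=
  inferInstanceAs (Ring (RingQuot _))

noncomputable instance (K : Type*) [Field K] (a b c d e : K) : Algebra K (BQAlg K a b c d e) :=
  inferInstanceAs (Algebra K (RingQuot _))

/-- The generator `r` of `A_f`. -/
noncomputable def bqR (K : Type*) [Field K] (a b c d e : K) : BQAlg K a b c d e :=
  RingQuot.mkAlgHom K (bqRel K a b c d e) (FreeAlgebra.ι K 0)

/-- The generator `s` of `A_f`. -/
noncomputable def bqS (K : Type*) [Field K] (a b c d e : K) : BQAlg K a b c d e :=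
  RingQuot.mkAlgHom K (bqRel K a b c d e) (FreeAlgebra.ι K 1)

/-- The generator `t` of `A_f`. -/
noncomputable def bqT (K : Type*) [Field K] (a b c d e : K) : BQAlg K a b c d e :=
  RingQuot.mkAlgHom K (bqRel K a b c d e) (FreeAlgebra.ι K 2)


/-- The relations defining the algebra `A_f` associated to a pair of quadratic forms
`f₁ = Σ_{i≤j} aᵢⱼ xᵢxⱼ`, `f₂ = Σ_{i≤j} bᵢⱼ xᵢxⱼ` in four variables.  The coefficient
vectors `a b : Fin 10 → K` list the coefficients of the monomials in the order
`x₁², x₁x₂, x₁x₃, x₁x₄, x₂², x₂x₃, x₂x₄, x₃², x₃x₄, x₄²`.  The generators are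
`p = ι 0`, `q = ι 1`, `r = ι 2`, `s = ι 3`, and the relations derive from
`fᵢ(αp+βr, αq+βs, α, β) = 0` (`i = 1,2`) together with `[αp+βr, αq+βs] = 0`. -/
def qiRel (K : Type*) [Field K] (a b : Fin 10 → K) :
    FreeAlgebra K (Fin 4) → FreeAlgebra K (Fin 4) → Prop := fun u v =>
  letI p := FreeAlgebra.ι K (0 : Fin 4)
  letI q := FreeAlgebra.ι K (1 : Fin 4)
  letI r := FreeAlgebra.ι K (2 : Fin 4)
  letI s := FreeAlgebra.ι K (3 : Fin 4)
  letI c : K → FreeAlgebra K (Fin 4) := algebraMap K _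
  v = 0 ∧ (
    u = c (a 0) * p ^ 2 + c (a 1) * (p * q) + c (a 4) * q ^ 2
        + c (a 2) * p + c (a 5) * q + c (a 7) ∨
    u = c (a 0) * (p * r + r * p) + c (a 1) * (p * s + r * q) + c (a 4) * (q * s + s * q)
        + c (a 3) * p + c (a 6) * q + c (a 2) * r + c (a 5) * s + c (a 8) ∨
    u = c (a 0) * r ^ 2 + c (a 1) * (r * s) + c (a 4) * s ^ 2
        + c (a 3) * r + c (a 6) * s + c (a 9) ∨
    u = c (b 0) * p ^ 2 + c (b 1) * (p * q) + c (b 4) * q ^ 2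
        + c (b 2) * p + c (b 5) * q + c (b 7) ∨
    u = c (b 0) * (p * r + r * p) + c (b 1) * (p * s + r * q) + c (b 4) * (q * s + s * q)
        + c (b 3) * p + c (b 6) * q + c (b 2) * r + c (b 5) * s + c (b 8) ∨
    u = c (b 0) * r ^ 2 + c (b 1) * (r * s) + c (b 4) * s ^ 2
        + c (b 3) * r + c (b 6) * s + c (b 9) ∨
    u = p * q - q * p ∨
    u = p * s + r * q - q * r - s * p ∨
    u = r * s - s * r)

/-- The algebra `A_f` associated to a pair of quadratic forms in four variables. -/
def QIAlg (K : Type*) [Field K] (a b : Fin 10 → K) := RingQuot (qiRel K a b)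

noncomputable instance (K : Type*) [Field K] (a b : Fin 10 → K) : Ring (QIAlg K a b) :=
  inferInstanceAs (Ring (RingQuot _))

noncomputable instance (K : Type*) [Field K] (a b : Fin 10 → K) : Algebra K (QIAlg K a b) :=
  inferInstanceAs (Algebra K (RingQuot _))

/-- The generator `p` of the quadric intersection algebra. -/
noncomputable def qiP (K : Type*) [Field K] (a b : Fin 10 → K) : QIAlg K a b :=
  RingQuot.mkAlgHom K _ (FreeAlgebra.ι K 0)

/-- The generator `q` of the quadric intersection algebra. -/
noncomputable def qiQ (K : Type*) [Field K] (a b : Fin 10 → K) : QIAlg K a b :=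
  RingQuot.mkAlgHom K _ (FreeAlgebra.ι K 1)

/-- The generator `r` of the quadric intersection algebra. -/
noncomputable def qiR (K : Type*) [Field K] (a b : Fin 10 → K) : QIAlg K a b :=
  RingQuot.mkAlgHom K _ (FreeAlgebra.ι K 2)

/-- The generator `s` of the quadric intersection algebra. -/
noncomputable def qiS (K : Type*) [Field K] (a b : Fin 10 → K) : QIAlg K a b :=
  RingQuot.mkAlgHom K _ (FreeAlgebra.ι K 3)

/-- `d i j = aᵢ bⱼ − aⱼ bᵢ` (1-based indices, as in the paper). -/
def qiD (K : Type*) [Field K] (a b : Fin 10 → K) (i j : Fin 10) : K :=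
  a i * b j - a j * b i

/-!
On the first quadric, the line relations say `p² = r² = 0` and `p r + r p = 1`, so that
`p r, p, r, r p` are `2 × 2` matrix units. Any `K`-algebra containing a solution `p, q, r, s` is
therefore a matrix algebra over the centralizer of `p` and `r`. In matrix coordinates the
commutation relations force `q` and `s` into the shapes `!![x, y; 0, x]` and `!![z, 0; y, z]`, and
the relations on the second quadric become exactly those of the binary quartic for `x, y, z`. So
`Mat₂(A_{f'})` has the universal property of `A_f`.
-/

section MatrixUnits

variable {n K B : Type*} [CommSemiring K] [Semiring B] [Algebra K B]

variable (K) in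
/-- The coefficient algebra of a system `E` of matrix units: the elements of `B` commuting with
every `E i j`. -/
abbrev matrixUnitCentralizer (E : n → n → B) : Subalgebra K B :=
  Subalgebra.centralizer K (Set.range fun ij : n × n => E ij.1 ij.2)

theorem commute_of_mem_matrixUnitCentralizer {E : n → n → B} {c : B}
    (hc : c ∈ matrixUnitCentralizer K E) (i j : n) : Commute (E i j) c :=
  Subalgebra.mem_centralizer_iff K |>.mp hc _ ⟨(i, j), rfl⟩

variable [Fintype n]

/-- The coordinate of `u` at the matrix unit `E i j`. It is an element of the ambient ring that
centralizes `E`, not of a smaller ring of scalars. -/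
def matrixUnitCoord (E : n → n → B) (u : B) (i j : n) : B := ∑ k, E k i * u * E j k

variable [DecidableEq n]

/-- A full system of `n × n` matrix units in a ring. -/
structure IsMatrixUnits (E : n → n → B) : Prop where
  mul_eq_ite : ∀ i j k l, E i j * E k l = if j = k then E i l else 0
  sum_diag : ∑ i, E i i = 1

namespace IsMatrixUnits

variable {E : n → n → B}

theorem matrixUnitCoord_mem_centralizer (hE : IsMatrixUnits E) (u : B) (i j : n) :
    matrixUnitCoord E u i j ∈ matrixUnitCentralizer K E := by
  rintro _ ⟨⟨k, l⟩, rfl⟩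
  calc E k l * matrixUnitCoord E u i j = E k i * u * E j l := by
        simp [matrixUnitCoord, Finset.mul_sum, ← mul_assoc, hE.mul_eq_ite]
    _ = matrixUnitCoord E u i j * E k l := by
        simp [matrixUnitCoord, Finset.sum_mul, mul_assoc, hE.mul_eq_ite]

theorem sum_matrixUnitCoord_mul (hE : IsMatrixUnits E) (u : B) :
    ∑ i, ∑ j, matrixUnitCoord E u i j * E i j = u :=
  calc ∑ i, ∑ j, matrixUnitCoord E u i j * E i j = ∑ i, ∑ j, E i i * u * E j j := by
        simp [matrixUnitCoord, Finset.sum_mul, mul_assoc, hE.mul_eq_ite]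
    _ = u := by simp_rw [← Finset.mul_sum, ← Finset.sum_mul, hE.sum_diag, one_mul, mul_one]

theorem matrixUnitCoord_sum_mul (hE : IsMatrixUnits E)
    (M : Matrix n n (matrixUnitCentralizer K E)) (i j : n) :
    matrixUnitCoord E (∑ k, ∑ l, M k l * E k l) i j = M i j := by
  have hM (i' j' k l : n) (x : B) : E i' j' * (M k l * x) = M k l * (E i' j' * x) :=
    (commute_of_mem_matrixUnitCentralizer (M k l).2 i' j').left_comm x
  calc matrixUnitCoord E (∑ k, ∑ l, M k l * E k l) i j = ∑ k, M i j * E k k := by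
        simp [matrixUnitCoord, Finset.mul_sum, Finset.sum_mul, mul_assoc, hM, hE.mul_eq_ite]
    _ = M i j := by rw [← Finset.mul_sum, hE.sum_diag, mul_one]

theorem sum_matrix_mul_apply_mul (hE : IsMatrixUnits E)
    (M N : Matrix n n (matrixUnitCentralizer K E)) :
    ∑ i, ∑ j, ((M * N) i j : B) * E i j =
      (∑ i, ∑ j, M i j * E i j) * ∑ i, ∑ j, N i j * E i j := by
  have hN (i j k l : n) (x : B) : E i j * (N k l * x) = N k l * (E i j * x) :=
    (commute_of_mem_matrixUnitCentralizer (N k l).2 i j).left_comm x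
  calc ∑ i, ∑ j, ((M * N) i j : B) * E i j
      = ∑ i, ∑ j, ∑ k, M i k * (N k j * E i j) := by
        simp [Matrix.mul_apply, Finset.sum_mul, mul_assoc]
    _ = ∑ k, ∑ j, ∑ i, M i k * (N k j * E i j) := Finset.sum_comm_cycle.trans
        (Finset.sum_congr rfl fun _ _ => Finset.sum_comm)
    _ = (∑ i, ∑ j, M i j * E i j) * ∑ i, ∑ j, N i j * E i j := by
        simp [Finset.mul_sum, Finset.sum_mul, mul_assoc, hN, hE.mul_eq_ite]

/-- A `K`-algebra with `n × n` matrix units is the matrix algebra over their centralizer. -/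
def matrixEquiv (hE : IsMatrixUnits E) : Matrix n n (matrixUnitCentralizer K E) ≃ₐ[K] B where
  toFun M := ∑ i, ∑ j, M i j * E i j
  invFun u := Matrix.of fun i j =>
    ⟨matrixUnitCoord E u i j, hE.matrixUnitCoord_mem_centralizer u i j⟩
  left_inv M := by
    ext i j
    exact hE.matrixUnitCoord_sum_mul M i j
  right_inv u := hE.sum_matrixUnitCoord_mul u
  map_mul' := hE.sum_matrix_mul_apply_mul
  map_add' M N := by simp [add_mul, Finset.sum_add_distrib]
  commutes' k := by
    simp [Matrix.algebraMap_matrix_apply, ← Finset.mul_sum, hE.sum_diag, apply_ite, ite_mul]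

theorem matrixEquiv_apply (hE : IsMatrixUnits E) (M : Matrix n n (matrixUnitCentralizer K E)) :
    hE.matrixEquiv M = ∑ i, ∑ j, M i j * E i j := rfl

end IsMatrixUnits

theorem isMatrixUnits_fin_two {p r : B} (hp : p ^ 2 = 0) (hpr : p * r + r * p = 1)
    (hr : r ^ 2 = 0) : IsMatrixUnits ![![p * r, p], ![r, r * p]] := by
  have hpp : p * p = 0 := by rw [← pow_two, hp]
  have hrr : r * r = 0 := by rw [← pow_two, hr]
  have hpp_mul (x : B) : p * (p * x) = 0 := by rw [← mul_assoc, hpp, zero_mul]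
  have hrr_mul (x : B) : r * (r * x) = 0 := by rw [← mul_assoc, hrr, zero_mul]
  have hprp : p * (r * p) = p := by simpa [mul_add, hpp_mul] using congrArg (p * ·) hpr
  have hrpr : r * (p * r) = r := by simpa [mul_add, hrr_mul] using congrArg (r * ·) hpr
  refine ⟨fun i j k l => ?_, by simpa using hpr⟩
  fin_cases i <;> fin_cases j <;> fin_cases k <;> fin_cases l <;>
    simp [mul_assoc, hpp, hrr, hprp, hrpr, hpp_mul, hrr_mul]

theorem matrix_algHom_ext {A : Type*} [Semiring A] [Algebra K A] {f g : Matrix n n A →ₐ[K] B}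
    (hscalar : f.comp (Matrix.scalarAlgHom n K) = g.comp (Matrix.scalarAlgHom n K))
    (hsingle : ∀ i j, f (Matrix.single i j 1) = g (Matrix.single i j 1)) : f = g := by
  ext M
  have hM : M = ∑ i, ∑ j, Matrix.scalarAlgHom n K (M i j) * Matrix.single i j 1 := by
    conv_lhs => rw [Matrix.matrix_eq_sum_single M]
    simp [← Matrix.smul_eq_diagonal_mul]
  have hfg (x : A) : f (Matrix.scalarAlgHom n K x) = g (Matrix.scalarAlgHom n K x) :=
    DFunLike.congr_fun hscalar x
  rw [hM]
  simp only [map_sum, map_mul, hfg, hsingle]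

theorem map_scalarAlgHom_apply_eq {A : Type*} [Semiring A] [Algebra K A]
    {f g : Matrix n n A →ₐ[K] B}
    (hsingle : ∀ i j, f (Matrix.single i j 1) = g (Matrix.single i j 1))
    {M : Matrix n n A} (hM : f M = g M) (i j : n) :
    f (Matrix.scalarAlgHom n K (M i j)) = g (Matrix.scalarAlgHom n K (M i j)) := by
  have h_coord : Matrix.scalarAlgHom n K (M i j) =
      ∑ k, Matrix.single k i 1 * M * Matrix.single j k 1 := by
    simp [Matrix.single_mul_mul_single, Matrix.sum_single_eq_diagonal]
  simp only [h_coord, map_sum, map_mul, hM, hsingle]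

theorem matrix_fin_two_algHom_ext {A : Type*} [Semiring A] [Algebra K A] {x y z : A}
    (hA : Algebra.adjoin K {x, y, z} = ⊤) {f g : Matrix (Fin 2) (Fin 2) A →ₐ[K] B}
    (hp : f !![0, 1; 0, 0] = g !![0, 1; 0, 0]) (hq : f !![x, y; 0, x] = g !![x, y; 0, x])
    (hr : f !![0, 0; 1, 0] = g !![0, 0; 1, 0]) (hs : f !![z, 0; y, z] = g !![z, 0; y, z]) :
    f = g := by
  have h₀₁ : (!![0, 1; 0, 0] : Matrix (Fin 2) (Fin 2) A) = Matrix.single 0 1 1 := by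
    ext i j
    fin_cases i <;> fin_cases j <;> simp
  have h₁₀ : (!![0, 0; 1, 0] : Matrix (Fin 2) (Fin 2) A) = Matrix.single 1 0 1 := by
    ext i j
    fin_cases i <;> fin_cases j <;> simp
  rw [h₀₁] at hp
  rw [h₁₀] at hr
  have hsingle (i j : Fin 2) : f (Matrix.single i j 1) = g (Matrix.single i j 1) := by
    have hmul (k l m : Fin 2) : (Matrix.single k m 1 : Matrix (Fin 2) (Fin 2) A) =
        Matrix.single k l 1 * Matrix.single l m 1 := by simp
    fin_cases i <;> fin_cases j
    · simp only [Fin.zero_eta, hmul 0 1 0, map_mul, hp, hr]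
    · exact hp
    · exact hr
    · simp only [Fin.mk_one, hmul 1 0 1, map_mul, hp, hr]
  refine matrix_algHom_ext (AlgHom.ext_of_adjoin_eq_top hA ?_) hsingle
  rintro _ (rfl | rfl | rfl)
  · exact map_scalarAlgHom_apply_eq hsingle hq 0 0
  · exact map_scalarAlgHom_apply_eq hsingle hq 0 1
  · exact map_scalarAlgHom_apply_eq hsingle hs 0 0

end MatrixUnits

section Relations

variable {K B : Type*} [CommSemiring K] [Semiring B] [Algebra K B]

/-- The defining relations of the algebra of the binary quartic
`a x⁴ + b x³ z + c x² z² + d x z³ + e z⁴`, imposed on elements of a `K`-algebra. -/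
structure BQRelations (a b c d e : K) (r s t : B) : Prop where
  r_mul_r : r * r = algebraMap K B a
  anticomm_r_s : r * s + s * r = algebraMap K B b
  anticomm_r_t : r * t + t * r + s * s = algebraMap K B c
  anticomm_s_t : s * t + t * s = algebraMap K B d
  t_mul_t : t * t = algebraMap K B e

/-- The line `(α p + β r, α q + β s, α, β)`, with noncommuting coordinates, lies on the quadric
`f = 0`: the coefficients of `α²`, `αβ` and `β²` in `f` vanish. -/
structure IsLineOnQuadric (f : Fin 10 → K) (p q r s : B) : Prop where
  coeff_αα : algebraMap K B (f 0) * p ^ 2 + algebraMap K B (f 1) * (p * q)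
    + algebraMap K B (f 4) * q ^ 2 + algebraMap K B (f 2) * p + algebraMap K B (f 5) * q
    + algebraMap K B (f 7) = 0
  coeff_αβ : algebraMap K B (f 0) * (p * r + r * p) + algebraMap K B (f 1) * (p * s + r * q)
    + algebraMap K B (f 4) * (q * s + s * q) + algebraMap K B (f 3) * p
    + algebraMap K B (f 6) * q + algebraMap K B (f 2) * r + algebraMap K B (f 5) * s
    + algebraMap K B (f 8) = 0
  coeff_ββ : algebraMap K B (f 0) * r ^ 2 + algebraMap K B (f 1) * (r * s)
    + algebraMap K B (f 4) * s ^ 2 + algebraMap K B (f 3) * r + algebraMap K B (f 6) * s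
    + algebraMap K B (f 9) = 0

/-- The coordinates `α p + β r` and `α q + β s` commute: the coefficients of `α²`, `αβ` and `β²`
in their commutator vanish, written without subtraction. -/
structure LineCoordsCommute (p q r s : B) : Prop where
  coeff_αα : p * q = q * p
  coeff_αβ : p * s + r * q = q * r + s * p
  coeff_ββ : r * s = s * r

/-- The defining relations of the quadric intersection algebra of the forms `f₁` and `f₂`. -/
structure QIRelations (f₁ f₂ : Fin 10 → K) (p q r s : B) : Prop where
  left : IsLineOnQuadric f₁ p q r s
  right : IsLineOnQuadric f₂ p q r s
  comm : LineCoordsCommute p q r s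

variable {C : Type*} [Semiring C] [Algebra K C] {p q r s : B}

theorem IsLineOnQuadric.map {f : Fin 10 → K} (h : IsLineOnQuadric f p q r s) (φ : B →ₐ[K] C) :
    IsLineOnQuadric f (φ p) (φ q) (φ r) (φ s) where
  coeff_αα := by simpa using congrArg φ h.coeff_αα
  coeff_αβ := by simpa using congrArg φ h.coeff_αβ
  coeff_ββ := by simpa using congrArg φ h.coeff_ββ

theorem LineCoordsCommute.map (h : LineCoordsCommute p q r s) (φ : B →+* C) :
    LineCoordsCommute (φ p) (φ q) (φ r) (φ s) where
  coeff_αα := by simpa using congrArg φ h.coeff_αα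
  coeff_αβ := by simpa using congrArg φ h.coeff_αβ
  coeff_ββ := by simpa using congrArg φ h.coeff_ββ

theorem QIRelations.map {f₁ f₂ : Fin 10 → K} (h : QIRelations f₁ f₂ p q r s) (φ : B →ₐ[K] C) :
    QIRelations f₁ f₂ (φ p) (φ q) (φ r) (φ s) :=
  ⟨h.left.map φ, h.right.map φ, h.comm.map (φ : B →+* C)⟩

end Relations

section Presentations

variable {K : Type*} [Field K] {B : Type*} [Ring B] [Algebra K B]

namespace BQAlg

variable {a b c d e : K}

theorem forall_bqRel_map_eq_iff {π : FreeAlgebra K (Fin 3) →ₐ[K] B} :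
    (∀ ⦃u v⦄, bqRel K a b c d e u v → π u = π v) ↔
      BQRelations a b c d e (π (.ι K 0)) (π (.ι K 1)) (π (.ι K 2)) := by
  simp only [bqRel, and_imp, forall_eq, or_imp, forall_and, map_sub,
    map_add, map_mul, map_zero, AlgHom.commutes, sub_eq_zero]
  exact ⟨fun ⟨h₁, h₂, h₃, h₄, h₅⟩ => ⟨h₁, h₂, h₃, h₄, h₅⟩,
    fun ⟨h₁, h₂, h₃, h₄, h₅⟩ => ⟨h₁, h₂, h₃, h₄, h₅⟩⟩

variable (K a b c d e) in
theorem bqRelations :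
    BQRelations a b c d e (bqR K a b c d e) (bqS K a b c d e) (bqT K a b c d e) :=
  forall_bqRel_map_eq_iff (π := RingQuot.mkAlgHom K (bqRel K a b c d e)).mp
    fun _ _ h => RingQuot.mkAlgHom_rel K h

theorem exists_algHom {r s t : B} (h : BQRelations a b c d e r s t) :
    ∃ φ : BQAlg K a b c d e →ₐ[K] B,
      φ (bqR K a b c d e) = r ∧ φ (bqS K a b c d e) = s ∧ φ (bqT K a b c d e) = t := by
  let π := FreeAlgebra.lift K ![r, s, t]
  have hπ : ∀ ⦃u v⦄, bqRel K a b c d e u v → π u = π v :=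
    forall_bqRel_map_eq_iff.mpr (by simpa [π] using h)
  have lift_mk (i : Fin 3) : RingQuot.liftAlgHom K ⟨π, hπ⟩
      (RingQuot.mkAlgHom K (bqRel K a b c d e) (.ι K i)) = ![r, s, t] i := by
    simp [π]
  exact ⟨RingQuot.liftAlgHom K ⟨π, hπ⟩, lift_mk 0, lift_mk 1, lift_mk 2⟩

variable (K a b c d e) in
theorem adjoin_eq_top :
    Algebra.adjoin K {bqR K a b c d e, bqS K a b c d e, bqT K a b c d e} = ⊤ := by
  let π : FreeAlgebra K (Fin 3) →ₐ[K] BQAlg K a b c d e := RingQuot.mkAlgHom K (bqRel K a b c d e)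
  have hπ : π.range = ⊤ := (AlgHom.range_eq_top π).mpr (RingQuot.mkAlgHom_surjective K _)
  have hgen : Set.range (π ∘ FreeAlgebra.ι K) = {π (.ι K 0), π (.ι K 1), π (.ι K 2)} := by
    ext u
    simp [Fin.exists_fin_succ, eq_comm]
  rw [← hπ, ← Algebra.map_top, ← FreeAlgebra.adjoin_range_ι, AlgHom.map_adjoin, ← Set.range_comp,
    hgen]
  rfl

end BQAlg

namespace QIAlg

variable {f₁ f₂ : Fin 10 → K}

theorem forall_qiRel_map_eq_iff {π : FreeAlgebra K (Fin 4) →ₐ[K] B} :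
    (∀ ⦃u v⦄, qiRel K f₁ f₂ u v → π u = π v) ↔
      QIRelations f₁ f₂ (π (.ι K 0)) (π (.ι K 1)) (π (.ι K 2)) (π (.ι K 3)) := by
  simp only [qiRel, and_imp, forall_eq, or_imp, forall_and, map_sub,
    map_add, map_mul, map_pow, map_zero, AlgHom.commutes, sub_sub, sub_eq_zero]
  exact ⟨fun ⟨h₁, h₂, h₃, h₄, h₅, h₆, h₇, h₈, h₉⟩ =>
      ⟨⟨h₁, h₂, h₃⟩, ⟨h₄, h₅, h₆⟩, ⟨h₇, h₈, h₉⟩⟩,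
    fun ⟨⟨h₁, h₂, h₃⟩, ⟨h₄, h₅, h₆⟩, ⟨h₇, h₈, h₉⟩⟩ => ⟨h₁, h₂, h₃, h₄, h₅, h₆, h₇, h₈, h₉⟩⟩

variable (K f₁ f₂) in
theorem qiRelations :
    QIRelations f₁ f₂ (qiP K f₁ f₂) (qiQ K f₁ f₂) (qiR K f₁ f₂) (qiS K f₁ f₂) :=
  forall_qiRel_map_eq_iff (π := RingQuot.mkAlgHom K (qiRel K f₁ f₂)).mp
    fun _ _ h => RingQuot.mkAlgHom_rel K h

theorem exists_algHom {p q r s : B} (h : QIRelations f₁ f₂ p q r s) :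
    ∃ φ : QIAlg K f₁ f₂ →ₐ[K] B, φ (qiP K f₁ f₂) = p ∧ φ (qiQ K f₁ f₂) = q ∧
      φ (qiR K f₁ f₂) = r ∧ φ (qiS K f₁ f₂) = s := by
  let π := FreeAlgebra.lift K ![p, q, r, s]
  have hπ : ∀ ⦃u v⦄, qiRel K f₁ f₂ u v → π u = π v :=
    forall_qiRel_map_eq_iff.mpr (by simpa [π] using h)
  have lift_mk (i : Fin 4) : RingQuot.liftAlgHom K ⟨π, hπ⟩
      (RingQuot.mkAlgHom K (qiRel K f₁ f₂) (.ι K i)) = ![p, q, r, s] i := by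
    simp [π]
  exact ⟨RingQuot.liftAlgHom K ⟨π, hπ⟩, lift_mk 0, lift_mk 1, lift_mk 2, lift_mk 3⟩

theorem algHom_ext {φ ψ : QIAlg K f₁ f₂ →ₐ[K] B}
    (hp : φ (qiP K f₁ f₂) = ψ (qiP K f₁ f₂)) (hq : φ (qiQ K f₁ f₂) = ψ (qiQ K f₁ f₂))
    (hr : φ (qiR K f₁ f₂) = ψ (qiR K f₁ f₂)) (hs : φ (qiS K f₁ f₂) = ψ (qiS K f₁ f₂)) :
    φ = ψ := by
  refine RingQuot.ringQuot_ext' (S := K) (s := qiRel K f₁ f₂) φ ψ (FreeAlgebra.hom_ext ?_)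
  funext i
  fin_cases i
  exacts [hp, hq, hr, hs]

end QIAlg

end Presentations

section QuarticQuadrics

variable {K B : Type*} [CommRing K] [Ring B] [Algebra K B] {a b c d e : K} {p q r s : B}

variable (K) in
/-- The quadratic form `x₁² − x₃x₄`. -/
def quarticForm₁ : Fin 10 → K := ![1, 0, 0, 0, 0, 0, 0, 0, -1, 0]

/-- The quadratic form `x₂² − (a x₃² + b x₁x₃ + c x₃x₄ + d x₁x₄ + e x₄²)`. -/
def quarticForm₂ (a b c d e : K) : Fin 10 → K := ![0, 0, -b, -d, 1, 0, 0, -a, -c, -e]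

theorem isLineOnQuadric_quarticForm₁_iff :
    IsLineOnQuadric (quarticForm₁ K) p q r s ↔ p ^ 2 = 0 ∧ p * r + r * p = 1 ∧ r ^ 2 = 0 := by
  constructor
  · rintro ⟨hαα, hαβ, hββ⟩
    exact ⟨by simpa [quarticForm₁] using hαα,
      by simpa [quarticForm₁, ← sub_eq_add_neg, sub_eq_zero] using hαβ,
      by simpa [quarticForm₁] using hββ⟩
  · rintro ⟨hp, hpr, hr⟩
    constructor <;> simp [quarticForm₁, hp, hpr, hr]

theorem isLineOnQuadric_quarticForm₂_iff :
    IsLineOnQuadric (quarticForm₂ a b c d e) p q r s ↔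
      q ^ 2 = algebraMap K B b * p + algebraMap K B a ∧
      q * s + s * q = algebraMap K B d * p + algebraMap K B b * r + algebraMap K B c ∧
      s ^ 2 = algebraMap K B d * r + algebraMap K B e := by
  constructor
  · rintro ⟨hαα, hαβ, hββ⟩
    exact ⟨by simpa [quarticForm₂, ← sub_eq_add_neg, sub_sub, sub_eq_zero] using hαα,
      by simpa [quarticForm₂, ← sub_eq_add_neg, sub_sub, sub_eq_zero, add_assoc] using hαβ,
      by simpa [quarticForm₂, ← sub_eq_add_neg, sub_sub, sub_eq_zero] using hββ⟩
  · rintro ⟨hq, hqs, hs⟩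
    constructor <;>
      simp only [quarticForm₂, hq, hqs, hs, Matrix.cons_val, map_neg, map_zero, map_one] <;>
      noncomm_ring

theorem exists_eq_of_lineCoordsCommute_matrix {A : Type*} [Semiring A]
    {Q S : Matrix (Fin 2) (Fin 2) A}
    (h : LineCoordsCommute !![0, 1; 0, 0] Q !![0, 0; 1, 0] S) :
    ∃ x y z : A, Q = !![x, y; 0, x] ∧ S = !![z, 0; y, z] := by
  have hQ₁₀ : Q 1 0 = 0 := by simpa [Matrix.mul_apply] using congrFun₂ h.coeff_αα 0 0
  have hQ₁₁ : Q 1 1 = Q 0 0 := by simpa [Matrix.mul_apply] using congrFun₂ h.coeff_αα 0 1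
  have hS₁₀ : S 1 0 = Q 0 1 := by
    simpa [Matrix.mul_apply, Matrix.vecMul_eq_sum] using congrFun₂ h.coeff_αβ 0 0
  have hS₁₁ : S 1 1 = S 0 0 := by
    simpa [Matrix.mul_apply, Matrix.vecMul_eq_sum] using congrFun₂ h.coeff_αβ 0 1
  have hS₀₁ : S 0 1 = 0 := by simpa [Matrix.mul_apply, eq_comm] using congrFun₂ h.coeff_ββ 0 0
  refine ⟨Q 0 0, Q 0 1, S 0 0, ?_, ?_⟩
  · rw [Q.eta_fin_two, hQ₁₀, hQ₁₁]
    rfl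
  · rw [S.eta_fin_two, hS₁₀, hS₁₁, hS₀₁]
    rfl

theorem isLineOnQuadric_quarticForm₂_matrix_iff {x y z : B} :
    IsLineOnQuadric (quarticForm₂ a b c d e)
        !![0, 1; 0, 0] !![x, y; 0, x] !![0, 0; 1, 0] !![z, 0; y, z] ↔
      BQRelations a b c d e x y z := by
  have h₁₁ : x * z + (y * y + z * x) = x * z + z * x + y * y := by abel
  have h₀₀ : x * z + y * y + z * x = x * z + z * x + y * y := by abel
  simp only [isLineOnQuadric_quarticForm₂_iff, pow_two, ← Algebra.smul_def]
  constructor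
  · rintro ⟨hqq, hqs, hss⟩
    exact ⟨by simpa [Matrix.algebraMap_matrix_apply] using congrFun₂ hqq 0 0,
      by simpa [Matrix.algebraMap_matrix_apply, Algebra.algebraMap_eq_smul_one] using
        congrFun₂ hqq 0 1,
      by simpa [Matrix.algebraMap_matrix_apply, h₀₀] using congrFun₂ hqs 0 0,
      by simpa [Matrix.algebraMap_matrix_apply, Algebra.algebraMap_eq_smul_one] using
        congrFun₂ hqs 0 1,
      by simpa [Matrix.algebraMap_matrix_apply] using congrFun₂ hss 0 0⟩
  · rintro ⟨hxx, hxy, hxz, hyz, hzz⟩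
    refine ⟨?_, ?_, ?_⟩ <;>
    · ext i j
      fin_cases i <;> fin_cases j <;>
        simp [Matrix.algebraMap_matrix_apply, ← Algebra.algebraMap_eq_smul_one, *]

theorem qiRelations_matrix_iff {x y z : B} :
    QIRelations (quarticForm₁ K) (quarticForm₂ a b c d e)
        !![0, 1; 0, 0] !![x, y; 0, x] !![0, 0; 1, 0] !![z, 0; y, z] ↔
      BQRelations a b c d e x y z := by
  refine ⟨fun h => isLineOnQuadric_quarticForm₂_matrix_iff.mp h.right,
    fun h => ⟨isLineOnQuadric_quarticForm₁_iff.mpr ⟨?_, ?_, ?_⟩,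
      isLineOnQuadric_quarticForm₂_matrix_iff.mpr h, ⟨?_, ?_, ?_⟩⟩⟩ <;>
  · ext i j
    fin_cases i <;> fin_cases j <;> simp [pow_two]

theorem QIRelations.exists_algHom_matrix {K B : Type*} [Field K] [Ring B] [Algebra K B]
    {a b c d e : K} {p q r s : B}
    (h : QIRelations (quarticForm₁ K) (quarticForm₂ a b c d e) p q r s) :
    ∃ ψ : Matrix (Fin 2) (Fin 2) (BQAlg K a b c d e) →ₐ[K] B,
      ψ !![0, 1; 0, 0] = p ∧
      ψ !![bqR K a b c d e, bqS K a b c d e; 0, bqR K a b c d e] = q ∧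
      ψ !![0, 0; 1, 0] = r ∧
      ψ !![bqT K a b c d e, 0; bqS K a b c d e, bqT K a b c d e] = s := by
  obtain ⟨hp, hpr, hr⟩ := isLineOnQuadric_quarticForm₁_iff.mp h.left
  have hE := isMatrixUnits_fin_two hp hpr hr
  let μ := hE.matrixEquiv (K := K)
  have hμp : μ !![0, 1; 0, 0] = p := by simp [μ, hE.matrixEquiv_apply]
  have hμr : μ !![0, 0; 1, 0] = r := by simp [μ, hE.matrixEquiv_apply]
  have h_mat : QIRelations (quarticForm₁ K) (quarticForm₂ a b c d e)
      (μ.symm p) (μ.symm q) (μ.symm r) (μ.symm s) := h.map μ.symm.toAlgHom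
  rw [μ.symm_apply_eq.mpr hμp.symm, μ.symm_apply_eq.mpr hμr.symm] at h_mat
  obtain ⟨x, y, z, hQ, hS⟩ := exists_eq_of_lineCoordsCommute_matrix h_mat.comm
  rw [hQ, hS, qiRelations_matrix_iff] at h_mat
  obtain ⟨φ, rfl, rfl, rfl⟩ := BQAlg.exists_algHom h_mat
  have map_fin_two (w x y z : BQAlg K a b c d e) :
      φ.mapMatrix !![w, x; y, z] = !![φ w, φ x; φ y, φ z] := by
    simp [Matrix.eta_fin_two (Matrix.map _ _)]
  refine ⟨(μ : _ →ₐ[K] B).comp φ.mapMatrix, ?_, ?_, ?_, ?_⟩ <;>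
    simp only [AlgHom.comp_apply, map_fin_two, map_zero, map_one, ← hQ, ← hS]
  exacts [hμp, μ.apply_symm_apply q, hμr, μ.apply_symm_apply s]

end QuarticQuadrics

theorem qi_iso_mat2_bq_general (K : Type*) [Field K] (a b c d e : K) :
    letI qa : Fin 10 → K := ![1, 0, 0, 0, 0, 0, 0, 0, -1, 0]
    letI qb : Fin 10 → K := ![0, 0, -b, -d, 1, 0, 0, -a, -c, -e]
    letI r' := bqR K a b c d e
    letI s' := bqS K a b c d e
    letI t' := bqT K a b c d e
    ∃ θ : QIAlg K qa qb ≃ₐ[K] Matrix (Fin 2) (Fin 2) (BQAlg K a b c d e),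
      θ (qiP K qa qb) = !![0, 1; 0, 0] ∧
      θ (qiQ K qa qb) = !![r', s'; 0, r'] ∧
      θ (qiR K qa qb) = !![0, 0; 1, 0] ∧
      θ (qiS K qa qb) = !![t', 0; s', t'] := by
  obtain ⟨θ, hθp, hθq, hθr, hθs⟩ :=
    QIAlg.exists_algHom (qiRelations_matrix_iff.mpr (BQAlg.bqRelations K a b c d e))
  obtain ⟨ψ, hψp, hψq, hψr, hψs⟩ :=
    (QIAlg.qiRelations K (quarticForm₁ K) (quarticForm₂ a b c d e)).exists_algHom_matrix
  have hθψ : θ.comp ψ = AlgHom.id K _ := matrix_fin_two_algHom_ext (BQAlg.adjoin_eq_top K a b c d e)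
    (by simp [hψp, hθp]) (by simp [hψq, hθq]) (by simp [hψr, hθr]) (by simp [hψs, hθs])
  have hψθ : ψ.comp θ = AlgHom.id K _ := QIAlg.algHom_ext
    (by simp [hψp, hθp]) (by simp [hψq, hθq]) (by simp [hψr, hθr]) (by simp [hψs, hθs])
  exact ⟨AlgEquiv.ofAlgHom θ ψ hθψ hψθ, hθp, hθq, hθr, hθs⟩

set_option synthInstance.maxHeartbeats 400000 in
set_option maxHeartbeats 1000000 in
/-- Let `f' = ax⁴+bx³z+cx²z²+dxz³+ez⁴` be a binary quartic and let `f = (f₁,f₂)` with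
`f₁ = x₁²−x₃x₄` and `f₂ = x₂² − (ax₃² + bx₁x₃ + cx₃x₄ + dx₁x₄ + ex₄²)`.  Then there is a
`K`-algebra isomorphism `θ : A_f → Mat₂(A_{f'})` given by `p ↦ E₁₂`, `q ↦ r'I₂ + s'E₁₂`,
`r ↦ E₂₁`, `s ↦ t'I₂ + s'E₂₁`. -/
theorem qi_iso_mat2_bq (K : Type*) [Field K] (h2 : (2 : K) ≠ 0) (h3 : (3 : K) ≠ 0)
    (a b c d e : K) :
    letI qa : Fin 10 → K := ![1, 0, 0, 0, 0, 0, 0, 0, -1, 0]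
    letI qb : Fin 10 → K := ![0, 0, -b, -d, 1, 0, 0, -a, -c, -e]
    letI r' := bqR K a b c d e
    letI s' := bqS K a b c d e
    letI t' := bqT K a b c d e
    ∃ θ : QIAlg K qa qb ≃ₐ[K] Matrix (Fin 2) (Fin 2) (BQAlg K a b c d e),
      θ (qiP K qa qb) = !![0, 1; 0, 0] ∧
      θ (qiQ K qa qb) = !![r', s'; 0, r'] ∧
      θ (qiR K qa qb) = !![0, 0; 1, 0] ∧
      θ (qiS K qa qb) = !![t', 0; s', t'] :=
  qi_iso_mat2_bq_general K a b c d e
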